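/- arXiv:2601.18768 — 9 statements merged into one kernel-verified Lean document; each statement's English description precedes it below -/
import Mathlib

section
/- For all vectors x, y, z in H, the inequality ‖x‖·‖y‖ + ‖z‖·‖x + y + z‖ ≥ ‖x + z‖·‖y + z‖ holds. -/
open RealInnerProductSpace

theorem stmt0 {H : Type*} [NormedAddCommGroup H] [InnerProductSpace ℝ H] (x y z : H) :
    ‖x‖ * ‖y‖ + ‖z‖ * ‖x + y + z‖ ≥ ‖x + z‖ * ‖y + z‖ := by
  -- Ptolemy's inequality for the points `x + y + z`, `y + z`, `y`, `0`.
  have h := EuclideanGeometry.mul_dist_le_mul_dist_add_mul_dist (x + y + z) (y + z) y 0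
  have hab : x + y + z - (y + z) = x := by abel
  have hac : x + y + z - y = x + z := by abel
  have hbc : y + z - y = z := by abel
  simpa only [dist_eq_norm, sub_zero, hab, hac, hbc] using h
end

section
/- For all vectors x, y, z in H, one has ‖x‖·‖y‖·‖z‖·‖x + y + z‖ ≥ ‖x‖²·⟨y,z⟩ + ‖y‖²·⟨x,z⟩ − ‖z‖²·⟨x,y⟩ + 2·⟨x,z⟩·⟨y,z⟩. -/
open RealInnerProductSpace

/-- The Gram determinant of three vectors is nonnegative. -/
theorem gram_det_three_nonneg {H : Type*} [NormedAddCommGroup H] [InnerProductSpace ℝ H]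
    (x y z : H) :
    0 ≤ ‖x‖ ^ 2 * ‖y‖ ^ 2 * ‖z‖ ^ 2 + 2 * ⟪x, y⟫ * ⟪x, z⟫ * ⟪y, z⟫
      - ‖x‖ ^ 2 * ⟪y, z⟫ ^ 2 - ‖y‖ ^ 2 * ⟪x, z⟫ ^ 2 - ‖z‖ ^ 2 * ⟪x, y⟫ ^ 2 := by
  have h := (Matrix.posSemidef_gram ℝ ![x, y, z]).det_nonneg
  simp only [Matrix.det_fin_three, Matrix.gram_apply, Matrix.cons_val,
    real_inner_self_eq_norm_sq, real_inner_comm x y, real_inner_comm x z,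
    real_inner_comm y z] at h
  linarith

/-- The vector `⟪y, z⟫ • x + ⟪x, z⟫ • y - ⟪x, y⟫ • z` has norm at most `‖x‖ * ‖y‖ * ‖z‖`. -/
theorem norm_inner_smul_add_sub_le {H : Type*} [NormedAddCommGroup H] [InnerProductSpace ℝ H]
    (x y z : H) :
    ‖⟪y, z⟫ • x + ⟪x, z⟫ • y - ⟪x, y⟫ • z‖ ≤ ‖x‖ * ‖y‖ * ‖z‖ := by
  refine le_of_sq_le_sq ?_ (by positivity)
  rw [← real_inner_self_eq_norm_sq]
  simp only [inner_add_left, inner_add_right, inner_sub_left, inner_sub_right,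
    real_inner_smul_left, real_inner_smul_right, real_inner_self_eq_norm_sq,
    norm_smul, mul_pow, Real.norm_eq_abs, sq_abs,
    real_inner_comm x y, real_inner_comm x z, real_inner_comm y z]
  linarith [gram_det_three_nonneg x y z]

theorem stmt2 {H : Type*} [NormedAddCommGroup H] [InnerProductSpace ℝ H] (x y z : H) :
    ‖x‖ * ‖y‖ * ‖z‖ * ‖x + y + z‖ ≥
      ‖x‖ ^ 2 * ⟪y, z⟫ + ‖y‖ ^ 2 * ⟪x, z⟫ - ‖z‖ ^ 2 * ⟪x, y⟫ + 2 * ⟪x, z⟫ * ⟪y, z⟫ := by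
  calc
    _ = ⟪⟪y, z⟫ • x + ⟪x, z⟫ • y - ⟪x, y⟫ • z, x + y + z⟫ := by
      simp only [inner_add_left, inner_add_right, inner_sub_left,
        real_inner_smul_left, real_inner_self_eq_norm_sq,
        real_inner_comm x y, real_inner_comm x z, real_inner_comm y z]
      ring
    _ ≤ ‖⟪y, z⟫ • x + ⟪x, z⟫ • y - ⟪x, y⟫ • z‖ * ‖x + y + z‖ := real_inner_le_norm _ _
    _ ≤ ‖x‖ * ‖y‖ * ‖z‖ * ‖x + y + z‖ := by
      gcongr
      exact norm_inner_smul_add_sub_le x y z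
end

section
/- Let x, y be vectors in H and λ, μ real numbers, and set z = λx + μy. Then the quantity ξ = ‖x‖²‖y‖²‖z‖²·‖x + y + z‖² − (‖x‖²⟨y,z⟩ + ‖y‖²⟨x,z⟩ − ‖z‖²⟨x,y⟩ + 2⟨x,z⟩⟨y,z⟩)² satisfies the identity ξ = (‖x‖²‖y‖² − ⟨x,y⟩²)·(‖x‖²·λ(λ+1) − ‖y‖²·μ(μ+1))². -/
open RealInnerProductSpace

theorem stmt4 {H : Type*} [NormedAddCommGroup H] [InnerProductSpace ℝ H] (x y z : H) (l μ : ℝ)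
    (hz : z = l • x + μ • y) :
    ‖x‖ ^ 2 * ‖y‖ ^ 2 * ‖z‖ ^ 2 * ‖x + y + z‖ ^ 2 -
      (‖x‖ ^ 2 * ⟪y, z⟫ + ‖y‖ ^ 2 * ⟪x, z⟫ - ‖z‖ ^ 2 * ⟪x, y⟫ + 2 * ⟪x, z⟫ * ⟪y, z⟫) ^ 2 =
      (‖x‖ ^ 2 * ‖y‖ ^ 2 - ⟪x, y⟫ ^ 2) *
        (‖x‖ ^ 2 * (l * (l + 1)) - ‖y‖ ^ 2 * (μ * (μ + 1))) ^ 2 := by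
  subst hz
  simp only [← real_inner_self_eq_norm_sq, inner_add_left, inner_add_right,
    real_inner_smul_left, real_inner_smul_right, real_inner_comm x y]
  ring
end

section
/- Let y, z be vectors in H and λ, μ real numbers, and set x = λy + μz. Then the quantity ξ = ‖x‖²‖y‖²‖z‖²·‖x + y + z‖² − (‖x‖²⟨y,z⟩ + ‖y‖²⟨x,z⟩ − ‖z‖²⟨x,y⟩ + 2⟨x,z⟩⟨y,z⟩)² satisfies the identity ξ = (‖y‖²‖z‖² − ⟨y,z⟩²)·(‖y‖²·λ(λ+1) + ‖z‖²·μ(μ+1) + 2λ(μ+1)·⟨y,z⟩)². -/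
open RealInnerProductSpace

theorem stmt5 {H : Type*} [NormedAddCommGroup H] [InnerProductSpace ℝ H] (x y z : H) (l μ : ℝ)
    (hx : x = l • y + μ • z) :
    ‖x‖ ^ 2 * ‖y‖ ^ 2 * ‖z‖ ^ 2 * ‖x + y + z‖ ^ 2 -
      (‖x‖ ^ 2 * ⟪y, z⟫ + ‖y‖ ^ 2 * ⟪x, z⟫ - ‖z‖ ^ 2 * ⟪x, y⟫ + 2 * ⟪x, z⟫ * ⟪y, z⟫) ^ 2 =
      (‖y‖ ^ 2 * ‖z‖ ^ 2 - ⟪y, z⟫ ^ 2) *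
        (‖y‖ ^ 2 * (l * (l + 1)) + ‖z‖ ^ 2 * (μ * (μ + 1)) + 2 * l * (μ + 1) * ⟪y, z⟫) ^ 2 := by
  have hsum : x + y + z = (l + 1) • y + (μ + 1) • z := by rw [hx]; module
  have hnorm (a b : ℝ) :
      ‖a • y + b • z‖ ^ 2 = a ^ 2 * ‖y‖ ^ 2 + 2 * a * b * ⟪y, z⟫ + b ^ 2 * ‖z‖ ^ 2 := by
    rw [norm_add_sq_real, norm_smul, norm_smul, mul_pow, mul_pow, Real.norm_eq_abs,
      Real.norm_eq_abs, sq_abs, sq_abs, real_inner_smul_left, real_inner_smul_right]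
    ring
  have hxz : ⟪x, z⟫ = l * ⟪y, z⟫ + μ * ‖z‖ ^ 2 := by
    rw [hx, inner_add_left, real_inner_smul_left, real_inner_smul_left,
      real_inner_self_eq_norm_sq]
  have hxy : ⟪x, y⟫ = l * ‖y‖ ^ 2 + μ * ⟪y, z⟫ := by
    rw [hx, inner_add_left, real_inner_smul_left, real_inner_smul_left,
      real_inner_self_eq_norm_sq, real_inner_comm]
  rw [hsum, hxz, hxy, hx, hnorm, hnorm]
  ring
end

section
/- Let x, z be vectors in H and λ, μ real numbers, and set y = λx + μz. Then the quantity ξ = ‖x‖²‖y‖²‖z‖²·‖x + y + z‖² − (‖x‖²⟨y,z⟩ + ‖y‖²⟨x,z⟩ − ‖z‖²⟨x,y⟩ + 2⟨x,z⟩⟨y,z⟩)² satisfies the identity ξ = (‖x‖²‖z‖² − ⟨x,z⟩²)·(‖x‖²·λ(λ+1) + ‖z‖²·μ(μ+1) + 2λ(μ+1)·⟨x,z⟩)². -/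
open RealInnerProductSpace

theorem stmt6 {H : Type*} [NormedAddCommGroup H] [InnerProductSpace ℝ H] (x y z : H) (l μ : ℝ)
    (hy : y = l • x + μ • z) :
    ‖x‖ ^ 2 * ‖y‖ ^ 2 * ‖z‖ ^ 2 * ‖x + y + z‖ ^ 2 -
      (‖x‖ ^ 2 * ⟪y, z⟫ + ‖y‖ ^ 2 * ⟪x, z⟫ - ‖z‖ ^ 2 * ⟪x, y⟫ + 2 * ⟪x, z⟫ * ⟪y, z⟫) ^ 2 =
      (‖x‖ ^ 2 * ‖z‖ ^ 2 - ⟪x, z⟫ ^ 2) *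
        (‖x‖ ^ 2 * (l * (l + 1)) + ‖z‖ ^ 2 * (μ * (μ + 1)) + 2 * l * (μ + 1) * ⟪x, z⟫) ^ 2 := by
  subst hy
  simp only [← real_inner_self_eq_norm_sq, inner_add_left, inner_add_right, real_inner_smul_left,
    real_inner_smul_right, real_inner_comm x z]
  ring
end

section
/- Let x, y, z be vectors in H. If equality ‖x‖·‖y‖ + ‖z‖·‖x + y + z‖ = ‖x + z‖·‖y + z‖ holds, then x, y, z are linearly dependent over ℝ, i.e., the family (x, y, z) is not linearly independent. -/
open RealInnerProductSpace

/-- If equality holds in Ptolemy's inequality for the nonzero vectors `b`, `c`, `d` and the origin,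
then the images of `b`, `c`, `d` under inversion in the unit sphere lie on a line in this order. -/
theorem sameRay_inversion_sub_of_ptolemy_eq {H : Type*} [NormedAddCommGroup H]
    [InnerProductSpace ℝ H] {b c d : H} (hb : b ≠ 0) (hc : c ≠ 0) (hd : d ≠ 0)
    (h : ‖b‖ * ‖d - c‖ + ‖c - b‖ * ‖d‖ = ‖c‖ * ‖d - b‖) :
    SameRay ℝ ((1 / ‖c‖) ^ 2 • c - (1 / ‖b‖) ^ 2 • b)
      ((1 / ‖d‖) ^ 2 • d - (1 / ‖c‖) ^ 2 • c) := by
  have hb' := norm_ne_zero_iff.mpr hb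
  have hc' := norm_ne_zero_iff.mpr hc
  have hd' := norm_ne_zero_iff.mpr hd
  rw [sameRay_iff_norm_add, sub_add_sub_cancel', ← dist_eq_norm, ← dist_eq_norm, ← dist_eq_norm,
    dist_div_norm_sq_smul hd hb, dist_div_norm_sq_smul hc hb, dist_div_norm_sq_smul hd hc,
    dist_eq_norm, dist_eq_norm, dist_eq_norm]
  field_simp
  linarith

theorem stmt10 {H : Type*} [NormedAddCommGroup H] [InnerProductSpace ℝ H] (x y z : H)
    (h : ‖x‖ * ‖y‖ + ‖z‖ * ‖x + y + z‖ = ‖x + z‖ * ‖y + z‖) :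
    ¬ LinearIndependent ℝ ![x, y, z] := by
  intro hli
  have coeff_eq_zero (p q r : ℝ) (hpqr : p • x + q • y + r • z = 0) : p = 0 ∧ q = 0 ∧ r = 0 := by
    have := Fintype.linearIndependent_iff.mp hli ![p, q, r] (by
      simpa [Fin.sum_univ_three] using hpqr)
    exact ⟨this 0, this 1, this 2⟩
  have hb : x ≠ 0 := fun h0 => one_ne_zero (coeff_eq_zero 1 0 0 (by simpa using h0)).1
  have hc : x + z ≠ 0 := fun h0 => one_ne_zero (coeff_eq_zero 1 0 1 (by simpa using h0)).1
  have hd : x + y + z ≠ 0 := fun h0 => one_ne_zero (coeff_eq_zero 1 1 1 (by simpa using h0)).1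
  have hray := sameRay_inversion_sub_of_ptolemy_eq hb hc hd (by
    rwa [show x + y + z - (x + z) = y by abel, show x + z - x = z by abel,
      show x + y + z - x = y + z by abel])
  have hγ : (1 / ‖x + z‖) ^ 2 ≠ 0 := by simpa using hc
  have hδ : (1 / ‖x + y + z‖) ^ 2 ≠ 0 := by simpa using hd
  generalize (1 / ‖x‖) ^ 2 = β at *
  generalize (1 / ‖x + z‖) ^ 2 = γ at *
  generalize (1 / ‖x + y + z‖) ^ 2 = δ at *
  have hu : γ • (x + z) - β • x ≠ 0 := fun h0 =>
    hγ (coeff_eq_zero (γ - β) 0 γ (by rw [← h0]; module)).2.2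
  have hv : δ • (x + y + z) - γ • (x + z) ≠ 0 := fun h0 =>
    hδ (coeff_eq_zero (δ - γ) δ (δ - γ) (by rw [← h0]; module)).2.1
  obtain ⟨s, t, -, ht, hst⟩ := hray.exists_pos hu hv
  have hy := (coeff_eq_zero (t * (δ - γ) - s * (γ - β)) (t * δ) (t * (δ - γ) - s * γ) (by
    rw [← sub_eq_zero.mpr hst.symm]; module)).2.1
  exact mul_ne_zero ht.ne' hδ hy
end

section
/- For all vectors x, y, z in H with ⟨x,y⟩·⟨x,z⟩·⟨y,z⟩ > 0, one has ‖x‖²·⟨y,z⟩² + ‖y‖²·⟨x,z⟩² + ‖z‖²·⟨x,y⟩² ≥ 3·⟨x,y⟩·⟨x,z⟩·⟨y,z⟩. -/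
open RealInnerProductSpace

/-- The sum of the pairwise inner products of three vectors is at most the sum of their squared
norms. -/
theorem real_inner_add_inner_add_inner_le {H : Type*} [NormedAddCommGroup H]
    [InnerProductSpace ℝ H] (u v w : H) :
    ⟪u, v⟫ + ⟪u, w⟫ + ⟪v, w⟫ ≤ ‖u‖ ^ 2 + ‖v‖ ^ 2 + ‖w‖ ^ 2 := by
  linarith [norm_sub_sq_real u v, norm_sub_sq_real u w, norm_sub_sq_real v w,
    sq_nonneg ‖u - v‖, sq_nonneg ‖u - w‖, sq_nonneg ‖v - w‖]

theorem stmt12 {H : Type*} [NormedAddCommGroup H] [InnerProductSpace ℝ H] (x y z : H)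
    (h : ⟪x, y⟫ * ⟪x, z⟫ * ⟪y, z⟫ > 0) :
    ‖x‖ ^ 2 * ⟪y, z⟫ ^ 2 + ‖y‖ ^ 2 * ⟪x, z⟫ ^ 2 + ‖z‖ ^ 2 * ⟪x, y⟫ ^ 2 ≥ 3 * (⟪x, y⟫ * ⟪x, z⟫ * ⟪y, z⟫) := by
  have key := real_inner_add_inner_add_inner_le (⟪y, z⟫ • x) (⟪x, z⟫ • y) (⟪x, y⟫ • z)
  simp only [real_inner_smul_left, real_inner_smul_right, norm_smul, mul_pow, Real.norm_eq_abs,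
    sq_abs] at key
  linarith
end

section
/- For all vectors x, y, z in H with ⟨x,y⟩·⟨x,z⟩·⟨y,z⟩ < 0, one has ‖x‖²·⟨y,z⟩² + ‖y‖²·⟨x,z⟩² + ‖z‖²·⟨x,y⟩² ≥ −6·⟨x,y⟩·⟨x,z⟩·⟨y,z⟩. -/
open RealInnerProductSpace

theorem stmt13 {H : Type*} [NormedAddCommGroup H] [InnerProductSpace ℝ H] (x y z : H)
    (h : ⟪x, y⟫ * ⟪x, z⟫ * ⟪y, z⟫ < 0) :
    ‖x‖ ^ 2 * ⟪y, z⟫ ^ 2 + ‖y‖ ^ 2 * ⟪x, z⟫ ^ 2 + ‖z‖ ^ 2 * ⟪x, y⟫ ^ 2 ≥ -6 * (⟪x, y⟫ * ⟪x, z⟫ * ⟪y, z⟫) := by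
  have key : 0 ≤ ‖⟪y, z⟫ • x + ⟪x, z⟫ • y + ⟪x, y⟫ • z‖ ^ 2 := sq_nonneg _
  simp only [← real_inner_self_eq_norm_sq, inner_add_left, inner_add_right,
    real_inner_smul_left, real_inner_smul_right, real_inner_comm x y, real_inner_comm x z,
    real_inner_comm y z] at key ⊢
  linarith
end

section
/- For all vectors x, y, z in H, one has (‖x‖·‖y‖ + ‖z‖·‖x+y+z‖ − ‖y+z‖·‖z+x‖) + (‖y‖·‖z‖ + ‖x‖·‖x+y+z‖ − ‖z+x‖·‖x+y‖) + (‖x‖·‖z‖ + ‖y‖·‖x+y+z‖ − ‖x+y‖·‖y+z‖) ≥ 0. -/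
open RealInnerProductSpace

/-- Ptolemy's inequality for the points `0`, `x`, `x + z`, `x + z + y`. -/
theorem norm_add_mul_norm_add_le {H : Type*} [NormedAddCommGroup H] [InnerProductSpace ℝ H]
    (x y z : H) : ‖y + z‖ * ‖z + x‖ ≤ ‖x‖ * ‖y‖ + ‖z‖ * ‖x + y + z‖ := by
  have h := EuclideanGeometry.mul_dist_le_mul_dist_add_mul_dist (0 : H) x (x + z) (x + z + y)
  have hxzy : dist x (x + z + y) = ‖y + z‖ := by
    rw [add_assoc, dist_self_add_right, add_comm]
  rw [hxzy, dist_self_add_right, dist_self_add_right, dist_zero_left, dist_zero_left,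
    dist_zero_left, add_right_comm x z y, add_comm x z] at h
  rwa [mul_comm]

theorem stmt19 {H : Type*} [NormedAddCommGroup H] [InnerProductSpace ℝ H] (x y z : H) :
    (‖x‖ * ‖y‖ + ‖z‖ * ‖x + y + z‖ - ‖y + z‖ * ‖z + x‖) +
      (‖y‖ * ‖z‖ + ‖x‖ * ‖x + y + z‖ - ‖z + x‖ * ‖x + y‖) +
      (‖x‖ * ‖z‖ + ‖y‖ * ‖x + y + z‖ - ‖x + y‖ * ‖y + z‖) ≥ 0 := by
  have hz := norm_add_mul_norm_add_le x y z
  have hx := norm_add_mul_norm_add_le y z x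
  have hy := norm_add_mul_norm_add_le z x y
  rw [show y + z + x = x + y + z by abel] at hx
  rw [show z + x + y = x + y + z by abel] at hy
  linarith
end
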